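/- Let n ≥ 1, y : Fin n → ℝ, and κ > 0, and define the Boltzmann policy p_κ(i) = exp(y(i)/κ) / (Σ_{j} exp(y(j)/κ)). Then the Boltzmann-weighted average of the values satisfies Σ_i p_κ(i)·y(i) ≥ (1/n)·Σ_i y(i); that is, the expected value under the Boltzmann policy is at least the expected value under the uniform policy. -/

import Mathlib

open Finset
open scoped BigOperators

theorem expect_le_sum_smul_of_monovaryOn {ι α β : Type*}
    [Semiring α] [LinearOrder α] [IsStrictOrderedRing α] [ExistsAddOfLE α]
    [AddCommMonoid β] [LinearOrder β] [IsOrderedCancelAddMonoid β]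
    [Module α β] [PosSMulMono α β] [Module ℚ≥0 β]
    {s : Finset ι} {w : ι → α} {f : ι → β} (hwf : MonovaryOn w f s) (hw : ∑ i ∈ s, w i = 1) :
    𝔼 i ∈ s, f i ≤ ∑ i ∈ s, w i • f i := by
  have hs : s.Nonempty := nonempty_of_sum_ne_zero (hw ▸ one_ne_zero)
  refine (nsmul_le_nsmul_iff_right hs.card_ne_zero).1 ?_
  calc
    #s • 𝔼 i ∈ s, f i = (∑ i ∈ s, w i) • ∑ i ∈ s, f i := by rw [card_smul_expect, hw, one_smul]
    _ ≤ #s • ∑ i ∈ s, w i • f i := hwf.sum_smul_sum_le_card_smul_sum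

section BoltzmannPolicy

variable {ι : Type*} [Fintype ι]

/-- The Boltzmann (softmax) policy `p_κ` at temperature `κ` for the estimated action values `y`,
as a vector of real probabilities. It is meaningful for `κ ≠ 0` only: at `κ = 0` the convention
`x / 0 = 0` makes it the uniform policy. -/
noncomputable def boltzmannPolicy (κ : ℝ) (y : ι → ℝ) (i : ι) : ℝ :=
  Real.exp (y i / κ) / ∑ j, Real.exp (y j / κ)

theorem sum_boltzmannPolicy [Nonempty ι] (κ : ℝ) (y : ι → ℝ) :
    ∑ i, boltzmannPolicy κ y i = 1 := by
  have partition_pos : 0 < ∑ j, Real.exp (y j / κ) :=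
    sum_pos (fun j _ ↦ Real.exp_pos _) univ_nonempty
  simp only [boltzmannPolicy, ← sum_div, div_self partition_pos.ne']

theorem monovary_boltzmannPolicy {κ : ℝ} (hκ : 0 < κ) (y : ι → ℝ) :
    Monovary (boltzmannPolicy κ y) y := by
  intro i j hij
  unfold boltzmannPolicy
  gcongr

theorem boltzmann_expected_ge_uniform_general [Nonempty ι] {κ : ℝ} (hκ : 0 < κ) (y : ι → ℝ) :
    𝔼 i, y i ≤ ∑ i, boltzmannPolicy κ y i * y i :=
  expect_le_sum_smul_of_monovaryOn ((monovary_boltzmannPolicy hκ y).monovaryOn _)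
    (sum_boltzmannPolicy κ y)

end BoltzmannPolicy

/-- The expected value under the Boltzmann policy is at least the expected
value under the uniform policy:
`Σ_i p_κ(i)·y(i) ≥ (1/n)·Σ_i y(i)`. -/
theorem boltzmann_expected_ge_uniform
    (n : ℕ) (hn : 1 ≤ n) (y : Fin n → ℝ) (κ : ℝ) (hκ : 0 < κ) :
    (1 / (n : ℝ)) * ∑ i, y i ≤
      ∑ i, (Real.exp (y i / κ) / ∑ j, Real.exp (y j / κ)) * y i := by
  have : Nonempty (Fin n) := ⟨⟨0, hn⟩⟩
  calc
    (1 / (n : ℝ)) * ∑ i, y i = 𝔼 i, y i := by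
      rw [Fintype.expect_eq_sum_div_card, Fintype.card_fin, one_div_mul_eq_div]
    _ ≤ ∑ i, boltzmannPolicy κ y i * y i := boltzmann_expected_ge_uniform_general hκ y
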